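/- arXiv:1304.0045 — 3 statements merged into one kernel-verified Lean document; each statement's English description precedes it below -/
import Mathlib

section
/- Let φ : ℝ → ℝ be three times continuously differentiable with φ, φ′, φ″, φ‴ all bounded on ℝ. If a sequence {x_n} ⊂ ℝ satisfies φ(x_n) → sup_{x∈ℝ} φ(x) as n → ∞, then: (i) lim_{n→∞} φ′(x_n) = 0, and (ii) limsup_{n→∞} φ″(x_n) ≤ 0. -/
open Filter

/-!
Near a supremum `S` of `f`, the second-order lower bound
`f y + f' y * (z - y) + c / 2 * (z - y) ^ 2 ≤ f z ≤ S`, valid where `c ≤ f''`,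
controls both derivatives.
With a global lower bound `-M ≤ f''` its discriminant in `z - y` gives `(f' y) ^ 2 ≤ 2 M (S - f y)`.
On a ball of radius `r` around `y`, adding it at `y + r` and `y - r` gives `c r ^ 2 ≤ 2 (S - f y)`,
where uniform continuity of `f''` lets one take `c` close to `f'' y` and `r` independent of `y`.
-/

open Metric Set Topology

section SecondOrderBound

variable {f f' f'' : ℝ → ℝ} {D : Set ℝ} {c M S r y z : ℝ}

lemma add_mul_sub_le_of_convexOn {m : ℝ} (hf : ConvexOn ℝ D f) (hy : y ∈ D) (hz : z ∈ D)
    (hm : HasDerivAt f m y) : f y + m * (z - y) ≤ f z := by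
  rcases lt_trichotomy y z with hyz | rfl | hzy
  · have := hf.le_slope_of_hasDerivAt hy hz hyz hm
    rw [slope_def_field, le_div_iff₀ (sub_pos.2 hyz)] at this
    linarith
  · simp
  · have := hf.slope_le_of_hasDerivAt hz hy hzy hm
    rw [slope_def_field, div_le_iff₀ (sub_pos.2 hzy)] at this
    linarith

lemma add_mul_sub_add_sq_le_of_le_deriv2 (hD : Convex ℝ D) (hf : ∀ x ∈ D, HasDerivAt f (f' x) x)
    (hf' : ∀ x ∈ D, HasDerivAt f' (f'' x) x) (hc : ∀ x ∈ D, c ≤ f'' x) (hy : y ∈ D) (hz : z ∈ D) :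
    f y + f' y * (z - y) + c / 2 * (z - y) ^ 2 ≤ f z := by
  have hg (x : ℝ) (hx : x ∈ D) :
      HasDerivAt (fun x ↦ f x - c / 2 * (x - y) ^ 2) (f' x - c * (x - y)) x :=
    ((hf x hx).sub ((((hasDerivAt_id x).sub_const y).pow 2).const_mul (c / 2))).congr_deriv
      (by simp only [id, Nat.cast_ofNat]; ring)
  have hg' (x : ℝ) (hx : x ∈ D) : HasDerivAt (fun x ↦ f' x - c * (x - y)) (f'' x - c) x :=
    ((hf' x hx).sub (((hasDerivAt_id x).sub_const y).const_mul c)).congr_deriv (by ring)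
  have hconvex : ConvexOn ℝ D fun x ↦ f x - c / 2 * (x - y) ^ 2 :=
    convexOn_of_hasDerivWithinAt2_nonneg hD (fun x hx ↦ (hg x hx).continuousAt.continuousWithinAt)
      (fun x hx ↦ (hg x (interior_subset hx)).hasDerivWithinAt)
      (fun x hx ↦ (hg' x (interior_subset hx)).hasDerivWithinAt)
      (fun x hx ↦ sub_nonneg.2 (hc x (interior_subset hx)))
  have := add_mul_sub_le_of_convexOn hconvex hy hz (hg y hy)
  simp only [sub_self] at this
  linarith

lemma sq_deriv_le_of_neg_le_deriv2 (hf : ∀ x, HasDerivAt f (f' x) x)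
    (hf' : ∀ x, HasDerivAt f' (f'' x) x) (hM : ∀ x, -M ≤ f'' x) (hS : S ∈ upperBounds (range f))
    (y : ℝ) : f' y ^ 2 ≤ 2 * M * (S - f y) := by
  have hquad (t : ℝ) : 0 ≤ M / 2 * (t * t) + -f' y * t + (S - f y) := by
    have := add_mul_sub_add_sq_le_of_le_deriv2 convex_univ (fun x _ ↦ hf x) (fun x _ ↦ hf' x)
      (fun x _ ↦ hM x) (mem_univ y) (mem_univ (y + t))
    rw [add_sub_cancel_left] at this
    linarith [hS (mem_range_self (y + t))]
  have := discrim_le_zero hquad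
  rw [discrim] at this
  linarith

lemma mul_sq_le_of_le_deriv2 (hr : 0 ≤ r) (hf : ∀ x ∈ closedBall y r, HasDerivAt f (f' x) x)
    (hf' : ∀ x ∈ closedBall y r, HasDerivAt f' (f'' x) x) (hc : ∀ x ∈ closedBall y r, c ≤ f'' x)
    (hS : S ∈ upperBounds (f '' closedBall y r)) : c * r ^ 2 ≤ 2 * (S - f y) := by
  have hbound {t : ℝ} (ht : |t| = r) : f y + f' y * t + c / 2 * t ^ 2 ≤ S := by
    have hmem : y + t ∈ closedBall y r := by simp [ht]
    have := add_mul_sub_add_sq_le_of_le_deriv2 (convex_closedBall y r) hf hf' hc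
      (mem_closedBall_self hr) hmem
    rw [add_sub_cancel_left] at this
    exact this.trans (hS (mem_image_of_mem f hmem))
  linarith [hbound (abs_of_nonneg hr), hbound ((abs_neg r).trans (abs_of_nonneg hr))]

end SecondOrderBound

section MaximizingFilter

variable {ι : Type*} {l : Filter ι} {x : ι → ℝ} {f f' f'' : ℝ → ℝ} {S : ℝ}

lemma tendsto_deriv_zero_of_tendsto_upperBound (hf : ∀ x, HasDerivAt f (f' x) x)
    (hf' : ∀ x, HasDerivAt f' (f'' x) x) (hf'' : BddBelow (range f''))
    (hS : S ∈ upperBounds (range f)) (hx : Tendsto (fun i ↦ f (x i)) l (𝓝 S)) :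
    Tendsto (fun i ↦ f' (x i)) l (𝓝 0) := by
  obtain ⟨m, hm⟩ := hf''
  have hle (i : ι) : ‖f' (x i)‖ ≤ √(2 * -m * (S - f (x i))) :=
    Real.abs_le_sqrt <| sq_deriv_le_of_neg_le_deriv2 hf hf'
      (fun y ↦ (neg_neg m).trans_le (hm (mem_range_self y))) hS (x i)
  have hlim : Tendsto (fun i ↦ √(2 * -m * (S - f (x i)))) l (𝓝 0) := by
    simpa using ((hx.const_sub S).const_mul (2 * -m)).sqrt
  exact squeeze_zero_norm hle hlim

lemma eventually_deriv2_lt_of_tendsto_upperBound (hf : ∀ x, HasDerivAt f (f' x) x)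
    (hf' : ∀ x, HasDerivAt f' (f'' x) x) (hf'' : UniformContinuous f'')
    (hS : S ∈ upperBounds (range f)) (hx : Tendsto (fun i ↦ f (x i)) l (𝓝 S)) {ε : ℝ}
    (hε : 0 < ε) : ∀ᶠ i in l, f'' (x i) < ε := by
  obtain ⟨r, hr, hclose⟩ : ∃ r > 0, ∀ y, ∀ z ∈ closedBall y r, f'' y - ε / 2 ≤ f'' z := by
    obtain ⟨δ, hδ, hclose⟩ := Metric.uniformContinuous_iff.1 hf'' (ε / 2) (half_pos hε)
    refine ⟨δ / 2, half_pos hδ, fun y z hz ↦ ?_⟩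
    have hdist := hclose ((mem_closedBall.1 hz).trans_lt (half_lt_self hδ))
    linarith [(abs_lt.1 hdist).1]
  have hnear : ∀ᶠ i in l, S - ε / 4 * r ^ 2 < f (x i) :=
    hx.eventually_const_lt (sub_lt_self S (by positivity))
  filter_upwards [hnear] with i hi
  have hsq : (f'' (x i) - ε / 2) * r ^ 2 ≤ 2 * (S - f (x i)) :=
    mul_sq_le_of_le_deriv2 hr.le (fun z _ ↦ hf z) (fun z _ ↦ hf' z) (hclose (x i))
      (upperBounds_mono_set (image_subset_range f _) hS)
  have hlt : f'' (x i) - ε / 2 < ε / 2 :=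
    lt_of_mul_lt_mul_right (by linarith) (sq_nonneg r)
  linarith

end MaximizingFilter

lemma uniformContinuous_of_norm_deriv_le {𝕜 G : Type*} [RCLike 𝕜] [NormedAddCommGroup G]
    [NormedSpace 𝕜 G] {f : 𝕜 → G} {C : ℝ} (hf : Differentiable 𝕜 f)
    (hC : ∀ x, ‖deriv f x‖ ≤ C) : UniformContinuous f :=
  (lipschitzWith_of_nnnorm_deriv_le (C := C.toNNReal) hf
    fun x ↦ NNReal.le_toNNReal_of_coe_le (hC x)).uniformContinuous

theorem stmt5_general {ι : Type*} {l : Filter ι} [l.NeBot] {φ : ℝ → ℝ} {x : ι → ℝ}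
    (hφ : ContDiff ℝ 2 φ) (hbdd : BddAbove (range φ))
    (hbdd₂ : BddBelow (range (deriv (deriv φ)))) (hcont₂ : UniformContinuous (deriv (deriv φ)))
    (hx : Tendsto (fun i ↦ φ (x i)) l (𝓝 (sSup (range φ)))) :
    Tendsto (fun i ↦ deriv φ (x i)) l (𝓝 0) ∧ limsup (fun i ↦ deriv (deriv φ) (x i)) l ≤ 0 := by
  have hd (y : ℝ) : HasDerivAt φ (deriv φ y) y := (hφ.differentiable two_ne_zero y).hasDerivAt
  have hd₂ (y : ℝ) : HasDerivAt (deriv φ) (deriv (deriv φ) y) y :=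
    ((hφ.iterate_deriv' 1 1).differentiable one_ne_zero y).hasDerivAt
  have hS : sSup (range φ) ∈ upperBounds (range φ) := fun _ ↦ le_csSup hbdd
  refine ⟨tendsto_deriv_zero_of_tendsto_upperBound hd hd₂ hbdd₂ hS hx,
    le_of_forall_pos_le_add fun ε hε ↦ ?_⟩
  have hlt := eventually_deriv2_lt_of_tendsto_upperBound hd hd₂ hcont₂ hS hx hε
  obtain ⟨m, hm⟩ := hbdd₂
  rw [zero_add]
  exact limsup_le_of_le (isCoboundedUnder_le_of_le l fun i ↦ hm (mem_range_self (x i)))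
    (hlt.mono fun _ ↦ le_of_lt)

/-- If `φ` is three times continuously differentiable with `φ, φ', φ'', φ'''`
bounded, and `φ (x n)` tends to `sup φ`, then `φ' (x n) → 0` and `limsup φ'' (x n) ≤ 0`. -/
theorem stmt5 (φ : ℝ → ℝ) (hφ : ContDiff ℝ 3 φ)
    (hb0 : ∃ M, ∀ x, |φ x| ≤ M) (hb1 : ∃ M, ∀ x, |deriv φ x| ≤ M)
    (hb2 : ∃ M, ∀ x, |deriv (deriv φ) x| ≤ M)
    (hb3 : ∃ M, ∀ x, |deriv (deriv (deriv φ)) x| ≤ M)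
    (x : ℕ → ℝ)
    (hx : Tendsto (fun n => φ (x n)) atTop (nhds (sSup (Set.range φ)))) :
    Tendsto (fun n => deriv φ (x n)) atTop (nhds 0) ∧
      limsup (fun n => deriv (deriv φ) (x n)) atTop ≤ 0 := by
  obtain ⟨⟨M₀, hM₀⟩, ⟨M₂, hM₂⟩, ⟨M₃, hM₃⟩⟩ := hb0, hb2, hb3
  exact stmt5_general (hφ.of_le (by norm_num)) ⟨M₀, forall_mem_range.2 fun y ↦ le_of_abs_le (hM₀ y)⟩
    ⟨-M₂, forall_mem_range.2 fun y ↦ neg_le_of_abs_le (hM₂ y)⟩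
    (uniformContinuous_of_norm_deriv_le
      ((hφ.iterate_deriv' 1 2).differentiable one_ne_zero) hM₃) hx
end

section
/- Let T > 0, let ℒu = J*u − u with J ∈ L¹(ℝ), J ≥ 0, ∫_ℝ J dx = 1, and let b = b(x,t) be a given continuous bounded real-valued function on ℝ×[0,T]. Suppose u : ℝ×[0,T] → ℝ is continuous and bounded, is three times continuously differentiable in x and once in t on ℝ×(0,T] with all these derivatives bounded on ℝ×[ε,T] for every ε > 0, and satisfies u_t = u_xx + ℒu − b(x,t) u_x on ℝ×(0,T]. If u(x,0) ≤ 0 for all x ∈ ℝ, then u(x,t) ≤ 0 for all x ∈ ℝ and t ∈ [0,T]. -/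
open MeasureTheory Set

/-! A positive value of `u` makes `S := sup (u - θ t)` positive for a small `θ > 0`. The supremum
need not be attained, so subtract a smooth penalty of size `δ`, centred at an almost maximal point,
with first and second derivatives `O(δ)`. The penalised function attains its maximum, and for
`δ < S` it does so at a positive time. There `u_t ≥ θ`, whereas `u_xx`, `|u_x|` and `J * u - u` are
bounded above by multiples of `δ`; a small `δ` contradicts the equation. -/

section PenalizedMaximum

open Filter Topology

theorem exists_isMaxOn_sub_translate {E α : Type*} [TopologicalSpace E] [AddGroup E]
    [IsTopologicalAddGroup E] [TopologicalSpace α] {K : Set α} (hK : IsCompact K)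
    {w : E × α → ℝ} (hw : ContinuousOn w (univ ×ˢ K)) {S : ℝ} (hS : IsLUB (w '' (univ ×ˢ K)) S)
    {ψ : E → ℝ} (hψ : Continuous ψ) (hψ0 : ψ 0 = 0) {δ : ℝ} (hδ : 0 < δ)
    (hψδ : ∀ᶠ x in cocompact E, δ ≤ ψ x) :
    ∃ a, ∃ p ∈ univ ×ˢ K, S - δ < w p - ψ (p.1 - a) ∧
      IsMaxOn (fun q => w q - ψ (q.1 - a)) (univ ×ˢ K) p := by
  obtain ⟨_, ⟨⟨a, τ⟩, haτ, rfl⟩, hnear, -⟩ := hS.exists_between (sub_lt_self S hδ)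
  obtain ⟨C, hC, hψC⟩ := mem_cocompact.1 hψδ
  have ha : ((a, τ) : E × α).1 - a ∈ C := by
    by_contra h
    have : δ ≤ ψ (a - a) := hψC h
    simp only [sub_self, hψ0] at this
    exact this.not_gt hδ
  have hCa : IsCompact (((· - a) ⁻¹' C) ×ˢ K) :=
    ((Homeomorph.subRight a).isCompact_preimage.2 hC).prod hK
  have hcont : ContinuousOn (fun q : E × α => w q - ψ (q.1 - a)) (univ ×ˢ K) :=
    hw.sub (by fun_prop)
  obtain ⟨p, hp, hmax⟩ := hCa.exists_isMaxOn ⟨(a, τ), ha, haτ.2⟩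
    (hcont.mono (prod_mono_left (subset_univ _)))
  have hgap : S - δ < w p - ψ (p.1 - a) :=
    hnear.trans_le <| by simpa [hψ0] using hmax (show (a, τ) ∈ _ from ⟨ha, haτ.2⟩)
  refine ⟨a, p, ⟨mem_univ _, hp.2⟩, hgap, fun q hq => ?_⟩
  by_cases hqC : q.1 - a ∈ C
  · exact hmax (show q ∈ _ from ⟨hqC, hq.2⟩)
  · have hwS : w q ≤ S := hS.1 (mem_image_of_mem w hq)
    have hδq : δ ≤ ψ (q.1 - a) := hψC hqC
    exact (sub_le_sub hwS hδq).trans hgap.le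

end PenalizedMaximum

section MaximumPoint

theorem deriv_deriv_nonpos_of_isLocalMax {f : ℝ → ℝ} {x : ℝ} (hmax : IsLocalMax f x)
    (hf : ContinuousAt f x) : deriv (deriv f) x ≤ 0 := by
  by_contra! hpos
  have hmin : IsLocalMin f x := isLocalMin_of_deriv_deriv_pos hpos hmax.deriv_eq_zero hf
  have hconst : f =ᶠ[nhds x] fun _ => f x := by
    filter_upwards [hmin, hmax] with y hxy hyx using le_antisymm hyx hxy
  exact hpos.ne' (by simp [hconst.deriv.deriv_eq])

variable {f g : ℝ → ℝ} {x : ℝ}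

theorem deriv_eq_of_isLocalMax_sub (hf : DifferentiableAt ℝ f x) (hg : DifferentiableAt ℝ g x)
    (hmax : IsLocalMax (f - g) x) : deriv f x = deriv g x := by
  rw [← sub_eq_zero, ← deriv_sub hf hg]
  exact hmax.deriv_eq_zero

theorem iteratedDeriv_two_le_of_isLocalMax_sub (hf : ContDiffAt ℝ 2 f x) (hg : ContDiffAt ℝ 2 g x)
    (hmax : IsLocalMax (f - g) x) : iteratedDeriv 2 f x ≤ iteratedDeriv 2 g x := by
  rw [← sub_nonpos, ← iteratedDeriv_sub hf hg, iteratedDeriv_succ, iteratedDeriv_one]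
  exact deriv_deriv_nonpos_of_isLocalMax hmax (hf.sub hg).continuousAt

theorem deriv_nonneg_of_isLocalMaxOn_of_Icc_subset {s : Set ℝ} {f' r : ℝ} (hrx : r < x)
    (hs : Icc r x ⊆ s) (hf : HasDerivWithinAt f f' s x) (hmax : IsLocalMaxOn f s x) : 0 ≤ f' := by
  have hcone : r - x ∈ posTangentConeAt s x :=
    sub_mem_posTangentConeAt_of_segment_subset <| by rwa [segment_symm, segment_eq_Icc hrx.le]
  have hle : (r - x) * f' ≤ 0 := by
    simpa using hmax.hasFDerivWithinAt_nonpos hf.hasFDerivWithinAt hcone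
  exact nonneg_of_mul_nonpos_right hle (sub_neg.2 hrx)

theorem le_deriv_of_forall_sub_mul_le {s : Set ℝ} {f' r θ : ℝ} (hrx : r < x) (hs : Icc r x ⊆ s)
    (hf : HasDerivWithinAt f f' s x) (hmax : ∀ y ∈ s, f y - θ * y ≤ f x - θ * x) : θ ≤ f' := by
  have hd : HasDerivWithinAt (fun y => f y - θ * y) (f' - θ) s x :=
    hf.sub (hasDerivAt_const_mul θ).hasDerivWithinAt
  exact sub_nonneg.1 (deriv_nonneg_of_isLocalMaxOn_of_Icc_subset hrx hs hd (IsMaxOn.localize hmax))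

end MaximumPoint

section SaturatedSquare

/-- A bounded smooth substitute for `x ^ 2`, used to penalise the distance from the origin. The
factor `2` makes it at least `1` outside `[-1, 1]`. -/
noncomputable def saturatedSquare (x : ℝ) : ℝ := 2 * x ^ 2 / (1 + x ^ 2)

theorem saturatedSquare_zero : saturatedSquare 0 = 0 := by simp [saturatedSquare]

theorem saturatedSquare_nonneg (x : ℝ) : 0 ≤ saturatedSquare x := by
  unfold saturatedSquare; positivity

theorem one_le_saturatedSquare {x : ℝ} (hx : 1 ≤ |x|) : 1 ≤ saturatedSquare x := by
  have : 1 ≤ x ^ 2 := (one_le_sq_iff_one_le_abs x).2 hx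
  rw [saturatedSquare, one_le_div (by positivity)]
  linarith

theorem contDiff_saturatedSquare {n : WithTop ℕ∞} : ContDiff ℝ n saturatedSquare := by
  unfold saturatedSquare
  fun_prop (disch := intro x; positivity)

theorem deriv_saturatedSquare : deriv saturatedSquare = fun x => 4 * x / (1 + x ^ 2) ^ 2 := by
  ext x
  have hnum : HasDerivAt (fun y : ℝ => 2 * y ^ 2) (4 * x) x :=
    ((hasDerivAt_pow 2 x).const_mul 2).congr_deriv (by norm_num; ring)
  have hden : HasDerivAt (fun y : ℝ => 1 + y ^ 2) (2 * x) x := by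
    simpa using (hasDerivAt_pow 2 x).const_add 1
  refine ((hnum.fun_div hden (by positivity)).congr_deriv ?_).deriv
  ring

theorem iteratedDeriv_two_saturatedSquare (x : ℝ) :
    iteratedDeriv 2 saturatedSquare x = (4 - 12 * x ^ 2) / (1 + x ^ 2) ^ 3 := by
  rw [iteratedDeriv_succ, iteratedDeriv_one, deriv_saturatedSquare]
  have hnum : HasDerivAt (fun y : ℝ => 4 * y) 4 x := by
    simpa using (hasDerivAt_id x).const_mul 4
  have hden : HasDerivAt (fun y : ℝ => (1 + y ^ 2) ^ 2) (4 * x * (1 + x ^ 2)) x :=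
    (((hasDerivAt_pow 2 x).const_add 1).fun_pow 2).congr_deriv (by norm_num; ring)
  refine ((hnum.fun_div hden (by positivity)).congr_deriv ?_).deriv
  field_simp
  ring

theorem abs_deriv_saturatedSquare_le (x : ℝ) : |deriv saturatedSquare x| ≤ 2 := by
  have habs : 2 * |x| ≤ 1 + x ^ 2 := by nlinarith [sq_nonneg (|x| - 1), sq_abs x]
  have hsq : 1 + x ^ 2 ≤ (1 + x ^ 2) ^ 2 := le_self_pow₀ (by nlinarith [sq_nonneg x]) two_ne_zero
  rw [deriv_saturatedSquare, abs_div, abs_mul, abs_of_pos (by positivity : 0 < (1 + x ^ 2) ^ 2),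
    div_le_iff₀ (by positivity), abs_of_pos four_pos]
  linarith

theorem iteratedDeriv_two_saturatedSquare_le (x : ℝ) : iteratedDeriv 2 saturatedSquare x ≤ 4 := by
  have hpow : 1 ≤ (1 + x ^ 2) ^ 3 := one_le_pow₀ (by nlinarith [sq_nonneg x])
  rw [iteratedDeriv_two_saturatedSquare, div_le_iff₀ (by positivity)]
  nlinarith [sq_nonneg x]

end SaturatedSquare

section Comparison

theorem exists_isMaxOn_strip_sub_saturatedSquare {w : ℝ → ℝ → ℝ} {K : Set ℝ} (hK : IsCompact K)
    (hw : ContinuousOn (Function.uncurry w) (univ ×ˢ K)) {S : ℝ}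
    (hS : IsLUB (Function.uncurry w '' (univ ×ˢ K)) S) {δ : ℝ} (hδ : 0 < δ) :
    ∃ a x, ∃ t ∈ K, S - δ < w x t ∧ ∀ y, ∀ s ∈ K,
      w y s - δ * saturatedSquare (y - a) ≤ w x t - δ * saturatedSquare (x - a) := by
  have hfar : ∀ᶠ x in Filter.cocompact ℝ, δ ≤ δ * saturatedSquare x := by
    filter_upwards [tendsto_norm_cocompact_atTop.eventually_ge_atTop 1] with x hx
    exact le_mul_of_one_le_right hδ.le (one_le_saturatedSquare hx)
  obtain ⟨a, ⟨x, t⟩, ⟨-, ht⟩, hgap, hmax⟩ := exists_isMaxOn_sub_translate hK hw hS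
    ((contDiff_saturatedSquare (n := 0)).continuous.const_mul δ)
    (by rw [saturatedSquare_zero, mul_zero]) hδ hfar
  have hpen : 0 ≤ δ * saturatedSquare (x - a) := mul_nonneg hδ.le (saturatedSquare_nonneg _)
  exact ⟨a, x, t, ht, hgap.trans_le (sub_le_self _ hpen), fun y s hs =>
    hmax (show (y, s) ∈ _ from ⟨mem_univ _, hs⟩)⟩

theorem diffusion_sub_drift_le_of_penalized_max {v : ℝ → ℝ} (hv : ContDiff ℝ 2 v) {a x δ β B : ℝ}
    (hδ : 0 ≤ δ) (hβ : |β| ≤ B)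
    (hmax : ∀ y, v y - δ * saturatedSquare (y - a) ≤ v x - δ * saturatedSquare (x - a)) :
    iteratedDeriv 2 v x - β * deriv v x ≤ (4 + 2 * B) * δ := by
  let ψ : ℝ → ℝ := fun y => δ * saturatedSquare (y - a)
  have hψ : ContDiff ℝ 2 ψ :=
    contDiff_const.mul (contDiff_saturatedSquare.comp (contDiff_id.sub contDiff_const))
  have hloc : IsLocalMax (v - ψ) x := Filter.Eventually.of_forall hmax
  have hv1 : deriv v x = δ * deriv saturatedSquare (x - a) := by
    rw [deriv_eq_of_isLocalMax_sub (hv.differentiable two_ne_zero x)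
      (hψ.differentiable two_ne_zero x) hloc, deriv_const_mul_field, deriv_comp_sub_const]
  have hv2 : iteratedDeriv 2 v x ≤ δ * iteratedDeriv 2 saturatedSquare (x - a) := by
    refine (iteratedDeriv_two_le_of_isLocalMax_sub hv.contDiffAt hψ.contDiffAt hloc).trans_eq ?_
    rw [iteratedDeriv_const_mul_field, iteratedDeriv_comp_sub_const]
  have hdrift : |β * deriv v x| ≤ B * (δ * 2) := by
    rw [abs_mul, hv1, abs_mul, abs_of_nonneg hδ]
    gcongr
    · exact (abs_nonneg β).trans hβ
    · exact abs_deriv_saturatedSquare_le _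
  have hdiff : iteratedDeriv 2 v x ≤ δ * 4 :=
    hv2.trans (mul_le_mul_of_nonneg_left (iteratedDeriv_two_saturatedSquare_le _) hδ)
  linarith [neg_le_of_abs_le hdrift]

theorem integral_mul_le_of_le {α : Type*} [MeasurableSpace α] {μ : Measure α} {J f : α → ℝ}
    (hJint : Integrable J μ) (hJ0 : 0 ≤ᵐ[μ] J) (hJ1 : ∫ z, J z ∂μ ≤ 1)
    (hJf : Integrable (fun z => J z * f z) μ) {c : ℝ} (hc : 0 ≤ c) (hfc : ∀ z, f z ≤ c) :
    ∫ z, J z * f z ∂μ ≤ c :=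
  calc ∫ z, J z * f z ∂μ ≤ ∫ z, J z * c ∂μ := by
        refine integral_mono_ae hJf (hJint.mul_const c) ?_
        filter_upwards [hJ0] with z hz using mul_le_mul_of_nonneg_left (hfc z) hz
    _ = (∫ z, J z ∂μ) * c := integral_mul_const c J
    _ ≤ c := mul_le_of_le_one_left hc hJ1

variable {T : ℝ} {u : ℝ → ℝ → ℝ}

theorem exists_isLUB_tilted_pos (hub : ∃ M, ∀ x, ∀ t ∈ Icc (0 : ℝ) T, u x t ≤ M)
    {x₁ t₁ : ℝ} (ht₁ : t₁ ∈ Icc (0 : ℝ) T) (hu₁ : 0 < u x₁ t₁) :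
    ∃ θ > 0, ∃ S > 0,
      IsLUB (Function.uncurry (fun x t => u x t - θ * t) '' (univ ×ˢ Icc 0 T)) S := by
  obtain ⟨M, hM⟩ := hub
  obtain ⟨θ, hθ, hθ₁⟩ := exists_pos_mul_lt hu₁ t₁
  have hmem : u x₁ t₁ - θ * t₁ ∈
      Function.uncurry (fun x t => u x t - θ * t) '' (univ ×ˢ Icc 0 T) :=
    ⟨(x₁, t₁), ⟨mem_univ _, ht₁⟩, rfl⟩
  have hbdd : BddAbove (Function.uncurry (fun x t => u x t - θ * t) '' (univ ×ˢ Icc 0 T)) := by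
    refine ⟨M, ?_⟩
    rintro _ ⟨⟨x, t⟩, ⟨-, ht⟩, rfl⟩
    exact (sub_le_self _ (mul_nonneg hθ.le ht.1)).trans (hM x t ht)
  have hS := isLUB_csSup ⟨_, hmem⟩ hbdd
  exact ⟨θ, hθ, _, (by linarith : 0 < u x₁ t₁ - θ * t₁).trans_le (hS.1 hmem), hS⟩

theorem exists_pos_time_penalized_max
    (huc : ContinuousOn (Function.uncurry u) (univ ×ˢ Icc 0 T)) (h0 : ∀ x, u x 0 ≤ 0) {θ S δ : ℝ}
    (hS : IsLUB (Function.uncurry (fun x t => u x t - θ * t) '' (univ ×ˢ Icc 0 T)) S)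
    (hδ : δ ∈ Ioo 0 S) :
    ∃ a x, ∃ t ∈ Ioc 0 T, S - δ < u x t - θ * t ∧ ∀ y, ∀ s ∈ Icc 0 T,
      u y s - θ * s - δ * saturatedSquare (y - a) ≤
        u x t - θ * t - δ * saturatedSquare (x - a) := by
  obtain ⟨a, x, t, ht, hgap, hmax⟩ := exists_isMaxOn_strip_sub_saturatedSquare isCompact_Icc
    (huc.sub (by fun_prop)) hS hδ.1
  refine ⟨a, x, t, ⟨ht.1.lt_of_ne' ?_, ht.2⟩, hgap, hmax⟩
  rintro rfl
  linarith [h0 x, hδ.2]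

theorem stmt7_general {J : ℝ → ℝ} (hJint : Integrable J) (hJ0 : 0 ≤ᵐ[volume] J)
    (hJ1 : ∫ x, J x ≤ 1) {b : ℝ → ℝ → ℝ} (hbb : ∃ B, ∀ x, ∀ t ∈ Ioc 0 T, |b x t| ≤ B)
    (huc : ContinuousOn (Function.uncurry u) (univ ×ˢ Icc 0 T))
    (hub : ∃ M, ∀ x, ∀ t ∈ Icc 0 T, |u x t| ≤ M)
    (hx2 : ∀ t ∈ Ioc 0 T, ContDiff ℝ 2 fun x => u x t) {u' : ℝ → ℝ → ℝ}
    (hu' : ∀ x, ∀ t ∈ Ioc 0 T, HasDerivWithinAt (fun s => u x s) (u' x t) (Ioc 0 T) t)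
    (hsub : ∀ x, ∀ t ∈ Ioc 0 T, u' x t ≤
      iteratedDeriv 2 (fun y => u y t) x + ((∫ z, J z * u (x - z) t) - u x t)
        - b x t * deriv (fun y => u y t) x)
    (h0 : ∀ x, u x 0 ≤ 0) :
    ∀ x, ∀ t ∈ Icc 0 T, u x t ≤ 0 := by
  obtain ⟨B, hB⟩ := hbb
  obtain ⟨M, hM⟩ := hub
  by_contra! ⟨x₁, t₁, ht₁, hu₁⟩
  obtain ⟨θ, hθ, S, hS0, hS⟩ :=
    exists_isLUB_tilted_pos ⟨M, fun x t ht => le_of_abs_le (hM x t ht)⟩ ht₁ hu₁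
  obtain ⟨δ, hδ, hδθ⟩ : ∃ δ ∈ Ioo 0 S, (5 + 2 * B) * δ < θ := by
    have hlim : ∀ᶠ δ in nhdsWithin 0 (Ioi 0), (5 + 2 * B) * δ < θ :=
      ((by fun_prop : Continuous fun δ => (5 + 2 * B) * δ).tendsto' 0 0 (mul_zero _)
        |>.mono_left nhdsWithin_le_nhds).eventually_lt_const hθ
    exact (hlim.and (Ioo_mem_nhdsGT hS0)).exists.imp fun _ h => h.symm
  obtain ⟨a, x, t, ht, hgap, hmax⟩ := exists_pos_time_penalized_max huc h0 hS hδ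
  have htI : t ∈ Icc 0 T := Ioc_subset_Icc_self ht
  have htime : θ ≤ u' x t :=
    le_deriv_of_forall_sub_mul_le (half_lt_self ht.1)
      ((Icc_subset_Ioc_iff (half_le_self ht.1.le)).2 ⟨half_pos ht.1, ht.2⟩) (hu' x t ht)
      fun s hs => by linarith [hmax x s (Ioc_subset_Icc_self hs)]
  have hspace := diffusion_sub_drift_le_of_penalized_max (hx2 t ht) hδ.1.le (hB x t ht)
    (x := x) (a := a) fun y => by linarith [hmax y t htI]
  have hconv : ∫ z, J z * u (x - z) t ≤ S + θ * t := by
    have hint : Integrable fun z => J z * u (x - z) t :=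
      hJint.mul_bdd ((hx2 t ht).continuous.comp (continuous_sub_left x)).aestronglyMeasurable
        (ae_of_all _ fun z => hM (x - z) t htI)
    refine integral_mul_le_of_le hJint hJ0 hJ1 hint
      (add_nonneg hS0.le (mul_nonneg hθ.le ht.1.le)) fun z => ?_
    exact sub_le_iff_le_add.1 (hS.1 (mem_image_of_mem _ (mk_mem_prod (mem_univ (x - z)) htI)))
  linarith [hsub x t ht]

end Comparison

/-- Comparison principle for `u_t = u_xx + ℒu - b u_x` with
`ℒu = J*u - u`: a bounded, continuous, sufficiently regular solution on `ℝ × [0,T]`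
which is nonpositive at `t = 0` stays nonpositive. -/
theorem stmt7 (T : ℝ) (hT : 0 < T)
    (J : ℝ → ℝ) (hJint : Integrable J) (hJpos : ∀ x, 0 ≤ J x) (hJ1 : (∫ x, J x) = 1)
    (b : ℝ → ℝ → ℝ)
    (hbc : ContinuousOn (Function.uncurry b) (Set.univ ×ˢ Set.Icc 0 T))
    (hbb : ∃ M, ∀ x, ∀ t ∈ Set.Icc (0 : ℝ) T, |b x t| ≤ M)
    (u : ℝ → ℝ → ℝ)
    (huc : ContinuousOn (Function.uncurry u) (Set.univ ×ˢ Set.Icc 0 T))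
    (hub : ∃ M, ∀ x, ∀ t ∈ Set.Icc (0 : ℝ) T, |u x t| ≤ M)
    (hx3 : ∀ t ∈ Set.Ioc (0 : ℝ) T, ContDiff ℝ 3 fun x => u x t)
    (hbdd : ∀ δ > (0 : ℝ), ∃ M, ∀ x, ∀ t ∈ Set.Icc δ T,
      |deriv (fun y => u y t) x| ≤ M ∧ |iteratedDeriv 2 (fun y => u y t) x| ≤ M ∧
        |iteratedDeriv 3 (fun y => u y t) x| ≤ M)
    (heq : ∀ x, ∀ t ∈ Set.Ioc (0 : ℝ) T,
      HasDerivWithinAt (fun s => u x s)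
        (iteratedDeriv 2 (fun y => u y t) x + ((∫ z, J z * u (x - z) t) - u x t)
          - b x t * deriv (fun y => u y t) x) (Set.Ioc 0 T) t)
    (h0 : ∀ x, u x 0 ≤ 0) :
    ∀ x, ∀ t ∈ Set.Icc (0 : ℝ) T, u x t ≤ 0 :=
  stmt7_general hJint (ae_of_all _ hJpos) hJ1.le
    (hbb.imp fun _ hB x t ht => hB x t (Ioc_subset_Icc_self ht)) huc hub
    (fun t ht => (hx3 t ht).of_le (by norm_num)) heq (fun _ _ _ => le_rfl) h0
end

section
/- Let J ∈ L¹(ℝ) with J ≥ 0 and ∫_ℝ J(x) dx = 1, and let ℒφ = J*φ − φ. Then for every φ ∈ L¹(ℝ): ∫_ℝ ℒφ(x) · sgn(φ(x)) dx ≤ 0, where sgn denotes the sign function. -/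
open MeasureTheory

/-!
For real `a` and `b` one has `(a - b) * sign b ≤ |a| - |b|`, since `b * sign b = |b|` and
`|sign b| ≤ 1`. Hence `∫ (T φ - φ) * sign φ ≤ ‖T φ‖₁ - ‖φ‖₁` for every operator `T` on `L¹`, and
this is nonpositive as soon as `T` is a contraction. By Young's inequality `‖J ⋆ φ‖₁ ≤ ‖J‖₁ ‖φ‖₁`,
so convolution with `J` is a contraction when `‖J‖₁ ≤ 1`.
-/

section Sign

theorem abs_real_sign_le_one (r : ℝ) : |Real.sign r| ≤ 1 := by
  rcases Real.sign_apply_eq r with h | h | h <;> simp [h]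

theorem real_sign_mul_self (r : ℝ) : Real.sign r * r = |r| := by
  rcases lt_trichotomy r 0 with h | rfl | h
  · rw [Real.sign_of_neg h, abs_of_neg h, neg_one_mul]
  · rw [mul_zero, abs_zero]
  · rw [Real.sign_of_pos h, abs_of_pos h, one_mul]

theorem measurable_real_sign : Measurable Real.sign :=
  Measurable.ite measurableSet_Iio measurable_const <|
    Measurable.ite measurableSet_Ioi measurable_const measurable_const

theorem sub_mul_real_sign_le_abs_sub_abs (a b : ℝ) : (a - b) * Real.sign b ≤ |a| - |b| := by
  have h : a * Real.sign b ≤ |a| :=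
    calc a * Real.sign b ≤ |a| * |Real.sign b| := (le_abs_self _).trans_eq (abs_mul _ _)
      _ ≤ |a| := mul_le_of_le_one_right (abs_nonneg a) (abs_real_sign_le_one b)
  rw [sub_mul, mul_comm b, real_sign_mul_self]
  exact sub_le_sub_right h _

variable {α : Type*} [MeasurableSpace α] {μ : Measure α} {f g : α → ℝ}

theorem integrable_mul_real_sign (hf : Integrable f μ) (hg : AEMeasurable g μ) :
    Integrable (fun x ↦ f x * Real.sign (g x)) μ :=
  hf.mul_bdd (measurable_real_sign.comp_aemeasurable hg).aestronglyMeasurable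
    (.of_forall fun x ↦ abs_real_sign_le_one (g x))

theorem integral_sub_mul_real_sign_le (hf : Integrable f μ) (hg : Integrable g μ) :
    ∫ x, (f x - g x) * Real.sign (g x) ∂μ ≤ (∫ x, |f x| ∂μ) - ∫ x, |g x| ∂μ := by
  rw [← integral_sub hf.abs hg.abs]
  exact integral_mono (integrable_mul_real_sign (hf.sub hg) hg.aemeasurable) (hf.abs.sub hg.abs)
    fun x ↦ sub_mul_real_sign_le_abs_sub_abs (f x) (g x)

end Sign

section Convolution

open ContinuousLinearMap
open scoped Convolution

variable {𝕜 G E E' F : Type*} [NontriviallyNormedField 𝕜] [NormedAddCommGroup E]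
  [NormedAddCommGroup E'] [NormedAddCommGroup F] [NormedSpace 𝕜 E] [NormedSpace 𝕜 E']
  [NormedSpace 𝕜 F] [NormedSpace ℝ F] [MeasurableSpace G] {μ ν : Measure G} {f : G → E} {g : G → E'}

theorem norm_convolution_le [Sub G] (L : E →L[𝕜] E' →L[𝕜] F) {x : G}
    (h : ConvolutionExistsAt (fun t ↦ ‖f t‖) (fun t ↦ ‖g t‖) x (mul ℝ ℝ) ν) :
    ‖(f ⋆[L, ν] g) x‖ ≤ ‖L‖ * ((fun t ↦ ‖f t‖) ⋆[mul ℝ ℝ, ν] (fun t ↦ ‖g t‖)) x := by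
  rw [convolution_mul, ← integral_const_mul]
  refine norm_integral_le_of_norm_le (h.integrable.const_mul ‖L‖) (.of_forall fun t ↦ ?_)
  exact (L.le_opNorm₂ (f t) (g (x - t))).trans_eq (mul_assoc _ _ _)

variable [AddGroup G] [MeasurableAdd₂ G] [MeasurableNeg G] [SFinite μ] [SFinite ν]
  [μ.IsAddRightInvariant]

theorem integrable_convolution (L : E →L[𝕜] E' →L[𝕜] F) (hf : Integrable f ν)
    (hg : Integrable g μ) : Integrable (f ⋆[L, ν] g) μ :=
  (hf.convolution_integrand L hg).integral_prod_left

theorem integral_norm_convolution_le (L : E →L[𝕜] E' →L[𝕜] F) (hf : Integrable f ν)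
    (hg : Integrable g μ) :
    ∫ x, ‖(f ⋆[L, ν] g) x‖ ∂μ ≤ ‖L‖ * ((∫ x, ‖f x‖ ∂ν) * ∫ x, ‖g x‖ ∂μ) := by
  have hnorm : Integrable ((fun t ↦ ‖f t‖) ⋆[mul ℝ ℝ, ν] (fun t ↦ ‖g t‖)) μ :=
    integrable_convolution (mul ℝ ℝ) hf.norm hg.norm
  calc ∫ x, ‖(f ⋆[L, ν] g) x‖ ∂μ
      ≤ ∫ x, ‖L‖ * ((fun t ↦ ‖f t‖) ⋆[mul ℝ ℝ, ν] (fun t ↦ ‖g t‖)) x ∂μ :=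
        integral_mono_ae (integrable_convolution L hf hg).norm (hnorm.const_mul ‖L‖) <|
          (hf.norm.ae_convolution_exists (mul ℝ ℝ) hg.norm).mono fun _ ↦ norm_convolution_le L
    _ = ‖L‖ * ((∫ x, ‖f x‖ ∂ν) * ∫ x, ‖g x‖ ∂μ) := by
        rw [integral_const_mul, integral_convolution (mul ℝ ℝ) hf.norm hg.norm, mul_apply']

/-- `J` and `φ` may be integrated against different measures, so that `ν` with `J = 1` covers
convolution of `φ` with any measure of total mass at most `1`. -/
theorem stmt9_general {J φ : G → ℝ} (hJ : Integrable J ν) (hJ1 : ∫ x, |J x| ∂ν ≤ 1)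
    (hφ : Integrable φ μ) :
    ∫ x, ((∫ y, J y * φ (x - y) ∂ν) - φ x) * Real.sign (φ x) ∂μ ≤ 0 := by
  have young : ∫ x, |(J ⋆[mul ℝ ℝ, ν] φ) x| ∂μ ≤ (∫ x, |J x| ∂ν) * ∫ x, |φ x| ∂μ := by
    simpa only [opNorm_mul, one_mul, Real.norm_eq_abs] using
      integral_norm_convolution_le (mul ℝ ℝ) hJ hφ
  have contraction : ∫ x, |(J ⋆[mul ℝ ℝ, ν] φ) x| ∂μ ≤ ∫ x, |φ x| ∂μ :=
    young.trans (mul_le_of_le_one_left (integral_nonneg fun x ↦ abs_nonneg (φ x)) hJ1)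
  exact (integral_sub_mul_real_sign_le (integrable_convolution (mul ℝ ℝ) hJ hφ) hφ).trans
    (sub_nonpos.mpr contraction)

end Convolution

/-- For `J ∈ L¹(ℝ)` nonnegative with `∫ J = 1` and `ℒφ = J*φ - φ`:
for every `φ ∈ L¹(ℝ)`, `∫ ℒφ(x) · sgn(φ(x)) dx ≤ 0`. -/
theorem stmt9 (J : ℝ → ℝ) (hJint : Integrable J) (hJpos : ∀ x, 0 ≤ J x)
    (hJ1 : (∫ x, J x) = 1) (φ : ℝ → ℝ) (hφ : Integrable φ) :
    (∫ x, ((∫ y, J y * φ (x - y)) - φ x) * Real.sign (φ x)) ≤ 0 :=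
  stmt9_general hJint (by simp only [abs_of_nonneg (hJpos _), hJ1, le_refl]) hφ
end
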